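/- Let b ∈ SV satisfy b(t²) ∼ b(t) on (0,∞), with associated functions B₀ and B∞. Assume there exist real numbers α < 0 < β and the function u ↦ u^{−α}·B∞(u) is almost decreasing on (0,1] while u ↦ u^{−β}·B₀(u) is almost increasing on (0,1] (i.e. ρ_{B∞} < 0 < π_{B₀}). Then there exists a function Ψ:(0,∞)→(0,∞) with Ψ ∼ b such that inf_{k∈ℤ} Ψ(λ_{k+1})/Ψ(λ_k) > 1. -/

import Mathlib

open Set MeasureTheory Real

/-- `f` is almost increasing on `S`: there is `C > 0` with `f s ≤ C * f t` whenever `s ≤ t` in `S`. -/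
def AlmostIncreasingOn (f : ℝ → ℝ) (S : Set ℝ) : Prop :=
  ∃ C > (0:ℝ), ∀ s ∈ S, ∀ t ∈ S, s ≤ t → f s ≤ C * f t

/-- `f` is almost decreasing on `S`: there is `C > 0` with `f t ≤ C * f s` whenever `s ≤ t` in `S`. -/
def AlmostDecreasingOn (f : ℝ → ℝ) (S : Set ℝ) : Prop :=
  ∃ C > (0:ℝ), ∀ s ∈ S, ∀ t ∈ S, s ≤ t → f t ≤ C * f s

/-- A measurable positive function `b` on `(0,∞)` is slowly varying if for every `ε > 0`,
`t ↦ t^ε * b t` is almost increasing and `t ↦ t^(-ε) * b t` is almost decreasing on `(0,∞)`. -/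
def SlowlyVarying (b : ℝ → ℝ) : Prop :=
  Measurable b ∧ (∀ t ∈ Ioi (0:ℝ), 0 < b t) ∧
  ∀ ε > (0:ℝ), AlmostIncreasingOn (fun t => t ^ ε * b t) (Ioi 0) ∧
    AlmostDecreasingOn (fun t => t ^ (-ε) * b t) (Ioi 0)

/-- `f ∼ g` on `S`: there are `c, C > 0` with `c * g x ≤ f x ≤ C * g x` for all `x ∈ S`. -/
def EquivOn (f g : ℝ → ℝ) (S : Set ℝ) : Prop :=
  ∃ c > (0:ℝ), ∃ C > (0:ℝ), ∀ x ∈ S, c * g x ≤ f x ∧ f x ≤ C * g x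

/-- The associated function `B₀(u) = b(e^{1 - 1/u})`. -/
noncomputable def assocB0 (b : ℝ → ℝ) (u : ℝ) : ℝ := b (Real.exp (1 - 1 / u))

/-- The associated function `B∞(u) = b(e^{1/u - 1})`. -/
noncomputable def assocBinf (b : ℝ → ℝ) (u : ℝ) : ℝ := b (Real.exp (1 / u - 1))

/-- `ℓ(t) = 1 + |log t|`. -/
noncomputable def ell (t : ℝ) : ℝ := 1 + |Real.log t|

/-- The sequence `λ_k`: `λ_k = e^{1 - e^{-k}}` for `k ≤ -1` and `λ_k = e^{e^k - 1}` for `k ≥ 0`. -/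
noncomputable def lam (k : ℤ) : ℝ :=
  if k < 0 then Real.exp (1 - Real.exp (-(k : ℝ))) else Real.exp (Real.exp (k : ℝ) - 1)

/-!
The scale `w t = 1 + log t` for `t ≥ 1` and `w t = 1 / (1 - log t)` for `t ≤ 1` increases, and turns
`λ_k` into the geometric sequence: `w (λ_k) = e^k`. On `(0, 1]` we have `B₀ (w t) = b t`, and on
`[1, ∞)` we have `B∞ (1 / w t) = b t`, so the hypotheses say that `w^(-β) b` and `w^α b` are almost
increasing there. With `δ = min β (-α) > 0`, the function `w^(-δ) b` is then almost increasing on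
`(0, ∞)`, hence equivalent to its running supremum `g`, which is monotone. For `Ψ = w^δ g ∼ b` each
step from `λ_k` to `λ_{k+1}` gains at least the factor `e^δ` coming from the weight.
-/

namespace AlmostIncreasingOn

variable {f g : ℝ → ℝ} {S T : Set ℝ}

theorem congr (hf : AlmostIncreasingOn f S) (hfg : EqOn f g S) : AlmostIncreasingOn g S := by
  obtain ⟨C, hC, h⟩ := hf
  refine ⟨C, hC, fun s hs t ht hst => ?_⟩
  rw [← hfg hs, ← hfg ht]
  exact h s hs t ht hst

theorem comp_monotoneOn (hf : AlmostIncreasingOn f T) (hg : MonotoneOn g S) (hST : MapsTo g S T) :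
    AlmostIncreasingOn (f ∘ g) S := by
  obtain ⟨C, hC, h⟩ := hf
  exact ⟨C, hC, fun s hs t ht hst => h _ (hST hs) _ (hST ht) (hg hs ht hst)⟩

theorem monotoneOn_mul (hf : AlmostIncreasingOn f S) (hg : MonotoneOn g S)
    (hf₀ : ∀ t ∈ S, 0 ≤ f t) (hg₀ : ∀ t ∈ S, 0 ≤ g t) :
    AlmostIncreasingOn (fun t => g t * f t) S := by
  obtain ⟨C, hC, h⟩ := hf
  refine ⟨C, hC, fun s hs t ht hst => ?_⟩
  calc g s * f s ≤ g t * (C * f t) :=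
        mul_le_mul (hg hs ht hst) (h s hs t ht hst) (hf₀ s hs) (hg₀ t ht)
    _ = C * (g t * f t) := mul_left_comm _ _ _

theorem rpow_mul_of_exponent_le {w : ℝ → ℝ} {p q : ℝ}
    (hf : AlmostIncreasingOn (fun t => w t ^ p * f t) S) (hw : MonotoneOn w S)
    (hf₀ : ∀ t ∈ S, 0 ≤ f t) (hw₀ : ∀ t ∈ S, 0 < w t) (hpq : p ≤ q) :
    AlmostIncreasingOn (fun t => w t ^ q * f t) S := by
  have hmono : MonotoneOn (fun t => w t ^ (q - p)) S := fun s hs t ht hst =>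
    rpow_le_rpow (hw₀ s hs).le (hw hs ht hst) (sub_nonneg.2 hpq)
  have hw_rpow (r : ℝ) : ∀ t ∈ S, 0 ≤ w t ^ r := fun t ht => rpow_nonneg (hw₀ t ht).le r
  refine (hf.monotoneOn_mul hmono (fun t ht => mul_nonneg (hw_rpow p t ht) (hf₀ t ht))
    (hw_rpow (q - p))).congr fun t ht => ?_
  change w t ^ (q - p) * (w t ^ p * f t) = w t ^ q * f t
  rw [← mul_assoc, ← rpow_add (hw₀ t ht), sub_add_cancel]

protected theorem union {c : ℝ} (hS : AlmostIncreasingOn f S) (hT : AlmostIncreasingOn f T)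
    (hSc : IsGreatest S c) (hTc : IsLeast T c) (hf₀ : ∀ t ∈ S ∪ T, 0 ≤ f t) :
    AlmostIncreasingOn f (S ∪ T) := by
  obtain ⟨C, hC, hS⟩ := hS
  obtain ⟨D, hD, hT⟩ := hT
  refine ⟨C + D + C * D, by positivity, fun s hs t ht hst => ?_⟩
  have hft : 0 ≤ f t := hf₀ t ht
  have hcases : f s ≤ C * f t ∨ f s ≤ D * f t ∨ f s ≤ C * D * f t := by
    rcases hs with hs | hs <;> rcases ht with ht | ht
    · exact .inl (hS s hs t ht hst)
    · refine .inr (.inr ?_)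
      calc f s ≤ C * f c := hS s hs c hSc.1 (hSc.2 hs)
        _ ≤ C * (D * f t) := by gcongr; exact hT c hTc.1 t ht (hTc.2 ht)
        _ = C * D * f t := (mul_assoc _ _ _).symm
    · obtain rfl : s = t := hst.antisymm ((hSc.2 ht).trans (hTc.2 hs))
      exact .inl (hS s ht s ht le_rfl)
    · exact .inr (.inl (hT s hs t ht hst))
  have hCt : 0 ≤ C * f t := by positivity
  have hDt : 0 ≤ D * f t := by positivity
  have hCDt : 0 ≤ C * D * f t := by positivity
  rcases hcases with h | h | h <;> linarith

theorem exists_monotoneOn_equivOn (hf : AlmostIncreasingOn f S) :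
    ∃ g : ℝ → ℝ, MonotoneOn g S ∧ EquivOn g f S := by
  obtain ⟨C, hC, h⟩ := hf
  have hub {t : ℝ} (ht : t ∈ S) : C * f t ∈ upperBounds (f '' (S ∩ Iic t)) := by
    rintro _ ⟨s, ⟨hs, hst⟩, rfl⟩
    exact h s hs t ht hst
  have hmem {t : ℝ} (ht : t ∈ S) : f t ∈ f '' (S ∩ Iic t) := mem_image_of_mem f ⟨ht, self_mem_Iic⟩
  refine ⟨fun t => sSup (f '' (S ∩ Iic t)), fun s hs t ht hst => ?_,
    1, one_pos, C, hC, fun t ht => ⟨?_, ?_⟩⟩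
  · exact csSup_le_csSup ⟨_, hub ht⟩ ⟨_, hmem hs⟩ (by gcongr)
  · rw [one_mul]
    exact le_csSup ⟨_, hub ht⟩ (hmem ht)
  · exact csSup_le ⟨_, hmem ht⟩ (hub ht)

theorem exists_equivOn_monotoneOn_mul {v : ℝ → ℝ} (hv : ∀ t ∈ S, 0 < v t)
    (hf : AlmostIncreasingOn (fun t => v t * f t) S) :
    ∃ Ψ : ℝ → ℝ, EquivOn Ψ f S ∧ MonotoneOn (fun t => v t * Ψ t) S := by
  obtain ⟨g, hg, c, hc, C, hC, h⟩ := hf.exists_monotoneOn_equivOn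
  refine ⟨fun t => g t / v t, ⟨c, hc, C, hC, fun t ht => ?_⟩,
    hg.congr fun t ht => (mul_div_cancel₀ (g t) (hv t ht).ne').symm⟩
  rw [le_div_iff₀' (hv t ht), div_le_iff₀' (hv t ht), mul_left_comm, mul_left_comm (v t)]
  exact h t ht

end AlmostIncreasingOn

theorem AlmostDecreasingOn.comp_antitoneOn {f g : ℝ → ℝ} {S T : Set ℝ}
    (hf : AlmostDecreasingOn f T) (hg : AntitoneOn g S) (hST : MapsTo g S T) :
    AlmostIncreasingOn (f ∘ g) S := by
  obtain ⟨C, hC, h⟩ := hf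
  exact ⟨C, hC, fun s hs t ht hst => h _ (hST ht) _ (hST hs) (hg hs ht hst)⟩

theorem EquivOn.pos {f g : ℝ → ℝ} {S : Set ℝ} (h : EquivOn f g S) (hg : ∀ x ∈ S, 0 < g x) :
    ∀ x ∈ S, 0 < f x := by
  obtain ⟨c, hc, C, -, hfg⟩ := h
  exact fun x hx => (mul_pos hc (hg x hx)).trans_le (hfg x hx).1

/-- The increasing logarithmic scale on `(0, ∞)`, equal to `1 / ℓ(t)` for `t < 1` and to `ℓ(t)` for
`t ≥ 1`; it is used to measure the growth of `b` across `t = 1` by a single power weight. -/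
noncomputable def logScale (t : ℝ) : ℝ := if t < 1 then (ell t)⁻¹ else ell t

theorem logScale_of_le_one {t : ℝ} (ht₀ : 0 ≤ t) (ht : t ≤ 1) : logScale t = (1 - log t)⁻¹ := by
  rcases ht.lt_or_eq with h | rfl
  · rw [logScale, if_pos h, ell, abs_of_nonpos (log_nonpos ht₀ ht), sub_eq_add_neg]
  · simp [logScale, ell]

theorem logScale_of_one_le {t : ℝ} (ht : 1 ≤ t) : logScale t = 1 + log t := by
  rw [logScale, if_neg ht.not_gt, ell, abs_of_nonneg (log_nonneg ht)]

theorem logScale_pos (t : ℝ) : 0 < logScale t := by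
  unfold logScale ell
  split_ifs <;> positivity

theorem strictMonoOn_logScale : StrictMonoOn logScale (Ioi 0) := by
  have hlow : StrictMonoOn logScale (Ioc 0 1) := fun s hs t ht hst => by
    rw [logScale_of_le_one hs.1.le hs.2, logScale_of_le_one ht.1.le ht.2]
    have hlog : log s < log t := log_lt_log hs.1 hst
    exact inv_strictAnti₀ (by linarith [log_nonpos ht.1.le ht.2]) (by linarith)
  have hhigh : StrictMonoOn logScale (Ici 1) := fun s hs t ht hst => by
    rw [logScale_of_one_le hs, logScale_of_one_le ht]
    gcongr
    exact zero_lt_one.trans_le hs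
  rw [← Ioc_union_Ici_eq_Ioi zero_lt_one]
  exact hlow.union hhigh (isGreatest_Ioc zero_lt_one) isLeast_Ici

theorem mapsTo_logScale_Ioc : MapsTo logScale (Ioc 0 1) (Ioc 0 1) := fun t ht => by
  refine ⟨logScale_pos t, ?_⟩
  rw [logScale_of_le_one ht.1.le ht.2]
  exact inv_le_one_of_one_le₀ (by linarith [log_nonpos ht.1.le ht.2])

theorem mapsTo_inv_logScale_Ici : MapsTo (fun t => (logScale t)⁻¹) (Ici 1) (Ioc 0 1) :=
  fun t ht => by
    refine ⟨inv_pos.2 (logScale_pos t), inv_le_one_of_one_le₀ ?_⟩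
    rw [logScale_of_one_le ht]
    linarith [log_nonneg ht]

theorem assocB0_logScale (b : ℝ → ℝ) {t : ℝ} (ht : t ∈ Ioc 0 1) :
    assocB0 b (logScale t) = b t := by
  rw [assocB0, logScale_of_le_one ht.1.le ht.2, one_div, inv_inv, sub_sub_cancel, exp_log ht.1]

theorem assocBinf_inv_logScale (b : ℝ → ℝ) {t : ℝ} (ht : t ∈ Ici 1) :
    assocBinf b (logScale t)⁻¹ = b t := by
  rw [assocBinf, logScale_of_one_le ht, one_div, inv_inv, add_sub_cancel_left,
    exp_log (zero_lt_one.trans_le ht)]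

theorem AlmostIncreasingOn.logScale_rpow_mul_of_assocB0 {b : ℝ → ℝ} {β : ℝ}
    (h : AlmostIncreasingOn (fun u => u ^ (-β) * assocB0 b u) (Ioc 0 1)) :
    AlmostIncreasingOn (fun t => logScale t ^ (-β) * b t) (Ioc 0 1) :=
  (h.comp_monotoneOn (strictMonoOn_logScale.monotoneOn.mono Ioc_subset_Ioi_self)
    mapsTo_logScale_Ioc).congr fun t ht => by simp only [Function.comp, assocB0_logScale b ht]

theorem AlmostDecreasingOn.logScale_rpow_mul_of_assocBinf {b : ℝ → ℝ} {α : ℝ}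
    (h : AlmostDecreasingOn (fun u => u ^ (-α) * assocBinf b u) (Ioc 0 1)) :
    AlmostIncreasingOn (fun t => logScale t ^ α * b t) (Ici 1) := by
  have hanti : AntitoneOn (fun t => (logScale t)⁻¹) (Ici 1) := fun s hs t ht hst =>
    inv_anti₀ (logScale_pos s) <| strictMonoOn_logScale.monotoneOn
      (mem_Ioi.2 (zero_lt_one.trans_le hs)) (mem_Ioi.2 (zero_lt_one.trans_le ht)) hst
  refine (h.comp_antitoneOn hanti mapsTo_inv_logScale_Ici).congr fun t ht => ?_
  simp only [Function.comp, assocBinf_inv_logScale b ht]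
  rw [inv_rpow (logScale_pos t).le, rpow_neg (logScale_pos t).le, inv_inv]

theorem almostIncreasingOn_logScale_rpow_mul {b : ℝ → ℝ} (hb : ∀ t ∈ Ioi (0 : ℝ), 0 ≤ b t)
    {α β δ : ℝ} (hδα : δ ≤ -α) (hδβ : δ ≤ β)
    (hBinf : AlmostDecreasingOn (fun u => u ^ (-α) * assocBinf b u) (Ioc 0 1))
    (hB0 : AlmostIncreasingOn (fun u => u ^ (-β) * assocB0 b u) (Ioc 0 1)) :
    AlmostIncreasingOn (fun t => logScale t ^ (-δ) * b t) (Ioi 0) := by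
  have hweaken {p : ℝ} {S : Set ℝ} (hS : S ⊆ Ioi 0) (hp : p ≤ -δ)
      (h : AlmostIncreasingOn (fun t => logScale t ^ p * b t) S) :
      AlmostIncreasingOn (fun t => logScale t ^ (-δ) * b t) S :=
    h.rpow_mul_of_exponent_le (strictMonoOn_logScale.monotoneOn.mono hS)
      (fun t ht => hb t (hS ht)) (fun t _ => logScale_pos t) hp
  have hlow := hweaken Ioc_subset_Ioi_self (neg_le_neg hδβ) hB0.logScale_rpow_mul_of_assocB0
  have hhigh := hweaken (Ici_subset_Ioi.2 zero_lt_one) (le_neg.2 hδα)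
    hBinf.logScale_rpow_mul_of_assocBinf
  rw [← Ioc_union_Ici_eq_Ioi zero_lt_one] at hb ⊢
  exact hlow.union hhigh (isGreatest_Ioc zero_lt_one) isLeast_Ici fun t ht =>
    mul_nonneg (rpow_nonneg (logScale_pos t).le _) (hb t ht)

theorem lam_pos (k : ℤ) : 0 < lam k := by
  unfold lam
  split_ifs <;> exact exp_pos _

theorem logScale_lam (k : ℤ) : logScale (lam k) = exp k := by
  unfold lam
  split_ifs with hk
  · have hle : exp (1 - exp (-(k : ℝ))) ≤ 1 := by
      rw [exp_le_one_iff, sub_nonpos, one_le_exp_iff, Left.nonneg_neg_iff]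
      exact_mod_cast hk.le
    rw [logScale_of_le_one (exp_pos _).le hle, log_exp, sub_sub_cancel, ← exp_neg, neg_neg]
  · have hle : 1 ≤ exp (exp (k : ℝ) - 1) := by
      rw [one_le_exp_iff, sub_nonneg, one_le_exp_iff]
      exact_mod_cast not_lt.1 hk
    rw [logScale_of_one_le hle, log_exp, add_sub_cancel]

theorem strictMono_lam : StrictMono lam := fun j k hjk => by
  rw [← strictMonoOn_logScale.lt_iff_lt (lam_pos j) (lam_pos k), logScale_lam, logScale_lam]
  exact exp_lt_exp.2 (Int.cast_lt.2 hjk)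

theorem exp_le_div_lam_of_monotoneOn {Ψ : ℝ → ℝ} {δ : ℝ} (hΨ₀ : ∀ t ∈ Ioi (0 : ℝ), 0 < Ψ t)
    (hΨ : MonotoneOn (fun t => logScale t ^ (-δ) * Ψ t) (Ioi 0)) (k : ℤ) :
    exp δ ≤ Ψ (lam (k + 1)) / Ψ (lam k) := by
  have hweight (i : ℤ) : logScale (lam i) ^ (-δ) = exp (-δ * i) := by
    rw [logScale_lam, ← exp_mul, mul_comm]
  have hstep : exp (-δ * k) * Ψ (lam k) ≤ exp (-δ * (k + 1 : ℤ)) * Ψ (lam (k + 1)) := by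
    simpa only [hweight] using hΨ (lam_pos k) (lam_pos (k + 1)) (strictMono_lam (lt_add_one k)).le
  calc exp δ = exp (-δ * k) / exp (-δ * (k + 1 : ℤ)) := by
        rw [← exp_sub]
        push_cast
        ring_nf
    _ ≤ Ψ (lam (k + 1)) / Ψ (lam k) := by
        rwa [div_le_div_iff₀ (exp_pos _) (hΨ₀ _ (lam_pos k)), mul_comm (Ψ _)]

theorem exists_increasing_discretization_general (b : ℝ → ℝ) (hb : ∀ t ∈ Ioi (0 : ℝ), 0 < b t)
    (α β : ℝ) (hα : α < 0) (hβ : 0 < β)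
    (hBinf : AlmostDecreasingOn (fun u => u ^ (-α) * assocBinf b u) (Ioc 0 1))
    (hB0 : AlmostIncreasingOn (fun u => u ^ (-β) * assocB0 b u) (Ioc 0 1)) :
    ∃ Ψ : ℝ → ℝ, EquivOn Ψ b (Ioi 0) ∧
      ∃ r > (1:ℝ), ∀ k : ℤ, r ≤ Ψ (lam (k + 1)) / Ψ (lam k) := by
  have hδ : 0 < min β (-α) := lt_min hβ (neg_pos.2 hα)
  obtain ⟨Ψ, hΨb, hΨ⟩ :=
    (almostIncreasingOn_logScale_rpow_mul (fun t ht => (hb t ht).le) (min_le_right β (-α))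
      (min_le_left β (-α)) hBinf hB0).exists_equivOn_monotoneOn_mul
        fun t _ => rpow_pos_of_pos (logScale_pos t) _
  exact ⟨Ψ, hΨb, exp (min β (-α)), one_lt_exp_iff.2 hδ,
    exp_le_div_lam_of_monotoneOn (hΨb.pos hb) hΨ⟩

theorem exists_increasing_discretization (b : ℝ → ℝ) (hb : SlowlyVarying b)
    (hsq : EquivOn (fun t => b (t ^ 2)) b (Ioi 0))
    (α β : ℝ) (hα : α < 0) (hβ : 0 < β)
    (hBinf : AlmostDecreasingOn (fun u => u ^ (-α) * assocBinf b u) (Ioc 0 1))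
    (hB0 : AlmostIncreasingOn (fun u => u ^ (-β) * assocB0 b u) (Ioc 0 1)) :
    ∃ Ψ : ℝ → ℝ, EquivOn Ψ b (Ioi 0) ∧
      ∃ r > (1:ℝ), ∀ k : ℤ, r ≤ Ψ (lam (k + 1)) / Ψ (lam k) :=
  exists_increasing_discretization_general b hb.2.1 α β hα hβ hBinf hB0
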